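/- Let k ≥ 2 and n_1, …, n_k be positive integers, let t be the number of indices i with n_i odd, let I_1 = {i : n_i = 1}, and let I_2 = {i : n_i = 2}. If t is even and |I_1| + |I_2| ≤ t/2, then the signed domination number of the complete k-partite graph K_{n_1,…,n_k} is at least 4. -/

import Mathlib

open scoped Classical

/-- The signed domination number of a finite simple graph `G`: the minimum weight of a
function `f : V → {−1, 1}` such that `f(N[v]) ≥ 1` for every vertex `v`. -/
noncomputable def signedDomNum {V : Type*} [Fintype V] (G : SimpleGraph V) : ℤ :=
  sInf {w : ℤ | ∃ f : V → ℤ, (∀ v, f v = 1 ∨ f v = -1) ∧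
    (∀ v, 1 ≤ f v + ∑ u ∈ G.neighborFinset v, f u) ∧ w = ∑ v, f v}

/-- An integer sum is odd iff it has an odd number of odd terms. -/
theorem odd_sum_int_iff {ι : Type*} (s : Finset ι) (f : ι → ℤ) :
    Odd (∑ i ∈ s, f i) ↔ Odd (s.filter fun i => Odd (f i)).card := by
  induction s using Finset.induction_on with
  | empty => simp
  | insert a s ha ih =>
    rw [Finset.sum_insert ha, Finset.filter_insert, Int.odd_add, ← Int.not_odd_iff_even, ih]
    split_ifs with h
    · rw [Finset.card_insert_of_notMem (by simp [ha]), Nat.odd_add_one]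
      tauto
    · tauto

/-- In a complete multipartite graph the neighbours of a vertex contribute the total weight minus
the weight of its part. -/
theorem sum_neighborFinset_completeMultipartiteGraph {k : ℕ} (n : Fin k → ℕ)
    (f : (Σ i : Fin k, Fin (n i)) → ℤ) (v : Σ i : Fin k, Fin (n i))
    [Fintype ((SimpleGraph.completeMultipartiteGraph
      fun i : Fin k => Fin (n i)).neighborSet v)] :
    ∑ u ∈ (SimpleGraph.completeMultipartiteGraph fun i : Fin k => Fin (n i)).neighborFinset v, f u
      = ∑ u, f u - ∑ j, f ⟨v.1, j⟩ := by
  have hnbr : (SimpleGraph.completeMultipartiteGraph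
      fun i : Fin k => Fin (n i)).neighborFinset v = Finset.univ.filter fun u => v.1 ≠ u.1 := by
    ext u
    simp [SimpleGraph.completeMultipartiteGraph]
  have hpart : ∑ u ∈ Finset.univ.filter (fun u : Σ i : Fin k, Fin (n i) => ¬ v.1 ≠ u.1), f u
      = ∑ j, f ⟨v.1, j⟩ := by
    rw [Finset.sum_filter, Fintype.sum_sigma, Finset.sum_eq_single v.1]
    · simp
    · intro i _ hi
      simp [hi.symm]
    · simp
  rw [hnbr, ← Finset.sum_filter_add_sum_filter_not Finset.univ
    (fun u : Σ i : Fin k, Fin (n i) => v.1 ≠ u.1) f, hpart]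
  ring

/-- A sum of signs has the same parity as the number of terms. -/
theorem odd_sum_sign_iff {ι : Type*} [Fintype ι] {f : ι → ℤ} (hf : ∀ i, f i = 1 ∨ f i = -1) :
    Odd (∑ i, f i) ↔ Odd (Fintype.card ι) := by
  rw [odd_sum_int_iff, Finset.filter_true_of_mem, Finset.card_univ]
  intro i _
  rcases hf i with h | h <;> rw [h] <;> decide

/-- Each part of a signed dominating function either is constantly `1` and has size at most the
total weight, or has weight at most the total weight minus `2`. -/
theorem part_sum_of_signedDom {m : ℕ} {f : Fin m → ℤ} (hf : ∀ j, f j = 1 ∨ f j = -1)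
    (hm : 0 < m) {W : ℤ} (hdom : ∀ j, 1 ≤ f j + (W - ∑ l, f l)) :
    (∑ j, f j = m ∧ (m : ℤ) ≤ W) ∨ ∑ j, f j ≤ W - 2 := by
  by_cases h : ∀ j, f j = 1
  · have hs : ∑ j, f j = m := by simp [h]
    have h0 := hdom ⟨0, hm⟩
    rw [h] at h0
    exact Or.inl ⟨hs, by linarith⟩
  · push Not at h
    obtain ⟨j, hj⟩ := h
    have h1 := hdom j
    rw [(hf j).resolve_left hj] at h1
    exact Or.inr (by linarith)

theorem signedDomNum_ge_four
    (k : ℕ) (hk : 2 ≤ k) (n : Fin k → ℕ) (hn : ∀ i, 0 < n i)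
    (t : ℕ) (ht : t = (Finset.univ.filter fun i => Odd (n i)).card)
    (hteven : Even t)
    (hI : 2 * ((Finset.univ.filter fun i => n i = 1).card
      + (Finset.univ.filter fun i => n i = 2).card) ≤ t) :
    4 ≤ signedDomNum (SimpleGraph.completeMultipartiteGraph fun i : Fin k => Fin (n i)) := by
  refine le_csInf ⟨_, fun _ => 1, by simp, fun v => ?_, rfl⟩ ?_
  · simp
  rintro W ⟨f, hf, hdom, hW⟩
  have hWsum : W = ∑ i, ∑ j, f ⟨i, j⟩ := by rw [hW, Fintype.sum_sigma]
  have hodd : ∀ i, Odd (∑ j, f ⟨i, j⟩) ↔ Odd (n i) := fun i => by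
    rw [odd_sum_sign_iff fun j => hf ⟨i, j⟩, Fintype.card_fin]
  have hpart : ∀ i, (∑ j, f ⟨i, j⟩ = n i ∧ (n i : ℤ) ≤ W) ∨ ∑ j, f ⟨i, j⟩ ≤ W - 2 := fun i =>
    part_sum_of_signedDom (fun j => hf ⟨i, j⟩) (hn i) fun j => by
      have h := hdom ⟨i, j⟩
      rwa [sum_neighborFinset_completeMultipartiteGraph, ← hW] at h
  have hWeven : Even W := by
    rw [← Int.not_odd_iff_even, hWsum, odd_sum_int_iff]
    simp only [hodd]
    rwa [← ht, Nat.not_odd_iff_even]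
  by_contra! hlt
  have hW2 : W ≤ 2 := by
    obtain ⟨r, hr⟩ := hWeven
    omega
  have hW0 : W ≤ 0 := by
    have hle : W ≤ ∑ i, (2 * ((if n i = 1 then 1 else 0) + (if n i = 2 then 1 else 0))
        - (if Odd (n i) then 1 else 0) : ℤ) := by
      rw [hWsum]
      refine Finset.sum_le_sum fun i _ => ?_
      have hi := hpart i
      have hoi := hodd i
      have hni := hn i
      rw [Int.odd_iff, Nat.odd_iff] at hoi
      simp only [Nat.odd_iff]
      split_ifs <;> omega
    rw [Finset.sum_sub_distrib, ← Finset.mul_sum, Finset.sum_add_distrib, Finset.sum_boole,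
      Finset.sum_boole, Finset.sum_boole, ← ht] at hle
    omega
  have hle : W ≤ ∑ _i : Fin k, (W - 2) := by
    conv_lhs => rw [hWsum]
    refine Finset.sum_le_sum fun i _ => ?_
    have hi := hpart i
    have hni := hn i
    omega
  rw [Finset.sum_const, Finset.card_univ, Fintype.card_fin, nsmul_eq_mul] at hle
  have hk' : (2 : ℤ) ≤ k := by exact_mod_cast hk
  nlinarith
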